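/- Let {p, q, r, s} be a concave-obtuse quadruple with center s. Then all six angles ∠pqs, ∠qps, ∠qrs, ∠rqs, ∠rps, and ∠prs are acute (strictly less than π/2). -/

import Mathlib

open EuclideanGeometry Real

noncomputable section

abbrev Plane := EuclideanSpace ℝ (Fin 2)

section

variable {V P : Type*} [NormedAddCommGroup V] [InnerProductSpace ℝ V] [MetricSpace P]
  [NormedAddTorsor V P]

theorem angle_lt_pi_div_two_of_pi_div_two_le_angle {a b s : P} (h : π / 2 ≤ ∠ a s b)
    (hbs : b ≠ s) : ∠ a b s < π / 2 := by
  rcases h.eq_or_lt with right | obtuse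
  · rw [angle_comm]
    exact angle_lt_pi_div_two_of_angle_eq_pi_div_two right.symm hbs
  · have angle_sum : ∠ s b a + ∠ b a s + ∠ a s b = π := angle_add_angle_add_angle_eq_pi a hbs
    rw [angle_comm s b a] at angle_sum
    linarith [angle_nonneg b a s]

theorem concaveObtuse_six_acute_angles_general {p q r s : P}
    (hps : p ≠ s) (hqs : q ≠ s) (hrs : r ≠ s)
    (hpq : π / 2 ≤ ∠ p s q) (hqr : π / 2 ≤ ∠ q s r) (hrp : π / 2 ≤ ∠ r s p) :
    ∠ p q s < π / 2 ∧ ∠ q p s < π / 2 ∧ ∠ q r s < π / 2 ∧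
    ∠ r q s < π / 2 ∧ ∠ r p s < π / 2 ∧ ∠ p r s < π / 2 := by
  have hqp : π / 2 ≤ ∠ q s p := hpq.trans_eq (angle_comm p s q)
  have hrq : π / 2 ≤ ∠ r s q := hqr.trans_eq (angle_comm q s r)
  have hpr : π / 2 ≤ ∠ p s r := hrp.trans_eq (angle_comm r s p)
  exact ⟨angle_lt_pi_div_two_of_pi_div_two_le_angle hpq hqs,
    angle_lt_pi_div_two_of_pi_div_two_le_angle hqp hps,
    angle_lt_pi_div_two_of_pi_div_two_le_angle hqr hrs,
    angle_lt_pi_div_two_of_pi_div_two_le_angle hrq hqs,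
    angle_lt_pi_div_two_of_pi_div_two_le_angle hrp hps,
    angle_lt_pi_div_two_of_pi_div_two_le_angle hpr hrs⟩

end

/-- In a concave-obtuse quadruple `{p, q, r, s}` with center `s` (i.e. `s` lies in the interior
of the triangle `pqr` and all three angles at `s` towards the other points exceed `π/2`),
the six angles `∠pqs`, `∠qps`, `∠qrs`, `∠rqs`, `∠rps`, `∠prs` are strictly acute. -/
theorem concaveObtuse_six_acute_angles
    (p q r s : Plane)
    (hne : p ≠ q ∧ p ≠ r ∧ p ≠ s ∧ q ≠ r ∧ q ≠ s ∧ r ≠ s)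
    (hcenter : s ∈ interior (convexHull ℝ ({p, q, r} : Set Plane)))
    (hpq : π / 2 < EuclideanGeometry.angle p s q)
    (hqr : π / 2 < EuclideanGeometry.angle q s r)
    (hrp : π / 2 < EuclideanGeometry.angle r s p) :
    EuclideanGeometry.angle p q s < π / 2 ∧ EuclideanGeometry.angle q p s < π / 2 ∧
    EuclideanGeometry.angle q r s < π / 2 ∧ EuclideanGeometry.angle r q s < π / 2 ∧
    EuclideanGeometry.angle r p s < π / 2 ∧ EuclideanGeometry.angle p r s < π / 2 := by
  obtain ⟨-, -, hps, -, hqs, hrs⟩ := hne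
  exact concaveObtuse_six_acute_angles_general hps hqs hrs hpq.le hqr.le hrp.le
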